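/- If w ∈ W satisfies w(ρ) − ρ ∈ (1+h)P, then w = 1. Consequently, the W-orbit of the image of ρ in P/(1+h)P has exactly |W| elements (the orbit is simple, i.e. free). -/

import Mathlib

noncomputable section

open scoped RealInnerProductSpace BigOperators

/-- Euclidean space `ℝ^n`, the ambient space of the root system. -/
abbrev Vn (n : ℕ) := EuclideanSpace ℝ (Fin n)

/-- The coroot `α^∨ = 2α/(α,α)` of a vector `α`. -/
def coroot {n : ℕ} (α : Vn n) : Vn n := (2 / ⟪α, α⟫) • α

/-- The reflection `s_α` applied to `β`: `β − (β, α^∨)·α`. -/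
def reflVec {n : ℕ} (α β : Vn n) : Vn n := β - (2 * ⟪β, α⟫ / ⟪α, α⟫) • α

/-- An irreducible reduced crystallographic root system of rank `n` in `ℝ^n`, together
with a fixed base of simple roots `α_1,…,α_n`, the corresponding set of positive roots,
the fundamental weights `ω_1,…,ω_n` and the highest short root `θ`. -/
structure RootSystemData (n : ℕ) where
  /-- the set of roots -/
  R : Finset (Vn n)
  /-- the set of positive roots -/
  Rplus : Finset (Vn n)
  /-- the simple roots `α_1,…,α_n` -/
  sroot : Fin n → Vn n
  /-- the fundamental weights `ω_1,…,ω_n` -/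
  fw : Fin n → Vn n
  /-- the highest short root `θ` -/
  hst : Vn n
  root_ne_zero : ∀ α ∈ R, α ≠ (0 : Vn n)
  span_top : Submodule.span ℝ (R : Set (Vn n)) = ⊤
  reflect_mem : ∀ α ∈ R, ∀ β ∈ R, reflVec α β ∈ R
  crystallographic : ∀ α ∈ R, ∀ β ∈ R, ∃ z : ℤ, 2 * ⟪β, α⟫ / ⟪α, α⟫ = (z : ℝ)
  reduced : ∀ α ∈ R, ∀ c : ℝ, c • α ∈ R → c = 1 ∨ c = -1
  irreducible : ∀ S : Set (Vn n), (∃ α ∈ R, α ∈ S) →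
    (∀ α ∈ R, ∀ β ∈ R, α ∈ S → ⟪α, β⟫ ≠ 0 → β ∈ S) → ∀ β ∈ R, β ∈ S
  sroot_mem : ∀ i, sroot i ∈ Rplus
  pos_sub : Rplus ⊆ R
  pos_or : ∀ α ∈ R, α ∈ Rplus ∨ -α ∈ Rplus
  pos_not_and : ∀ α ∈ Rplus, -α ∉ Rplus
  pos_decomp : ∀ α ∈ Rplus, ∃ c : Fin n → ℕ, α = ∑ i, (c i : ℝ) • sroot i
  fw_pair : ∀ i j, ⟪fw i, coroot (sroot j)⟫ = if i = j then 1 else 0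
  theta_mem : hst ∈ Rplus
  theta_short : ∀ α ∈ R, ⟪hst, hst⟫ ≤ ⟪α, α⟫
  theta_highest : ∀ α ∈ R, ∃ c : Fin n → ℝ, (∀ i, 0 ≤ c i) ∧
    coroot hst - coroot α = ∑ i, c i • coroot (sroot i)

namespace RootSystemData

variable {n : ℕ} (D : RootSystemData n)

/-- The weight lattice `P = ⊕_i ℤ·ω_i`. -/
def P : Submodule ℤ (Vn n) := Submodule.span ℤ (Set.range D.fw)

/-- `ρ = ω_1 + ⋯ + ω_n` (the half-sum of the positive roots). -/
def rho : Vn n := ∑ i, D.fw i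

/-- The Coxeter number `h = 1 + (ρ, θ^∨)`. -/
def h : ℝ := 1 + ⟪D.rho, coroot D.hst⟫

/-- The Weyl group `W`, as the subgroup of `GL(ℝ^n)` generated by the reflections
`s_α`, `α ∈ R`. -/
def Weyl : Subgroup ((Vn n) ≃ₗ[ℝ] (Vn n)) :=
  Subgroup.closure { w | ∃ α ∈ D.R, ∀ v, w v = reflVec α v }

/-- `ω_r` is a minuscule (fundamental) weight: `(ω_r, α^∨) ≤ 1` for all `α ∈ R_+`. -/
def Minuscule (r : Fin n) : Prop := ∀ α ∈ D.Rplus, ⟪D.fw r, coroot α⟫ ≤ 1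

end RootSystemData

/-!
For `p ∈ P`, pair `w ρ - ρ = m p` with a simple coroot `α_j^∨`. The left side is
`(ρ, (w⁻¹ α_j)^∨) - 1`, which lies in `[-h, h - 2]` because `θ^∨` is the highest coroot, while the
right side is an integral multiple of `m`. If `m > h`, the integer vanishes for every `j`, so
`w ρ = ρ`; and `ρ`, being strictly dominant, has trivial stabilizer by the strong exchange
property. Since `W` preserves `P`, comparing two elements of `W` reduces to their quotient.
-/

section Reflection

variable {n : ℕ}

theorem inner_coroot (v α : Vn n) : ⟪v, coroot α⟫ = 2 * ⟪v, α⟫ / ⟪α, α⟫ := by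
  rw [coroot, real_inner_smul_right, div_mul_eq_mul_div]

theorem coroot_neg (α : Vn n) : coroot (-α) = -coroot α := by
  simp only [coroot, inner_neg_neg, smul_neg]

theorem map_coroot {w : Vn n ≃ₗ[ℝ] Vn n} (hw : ∀ x y, ⟪w x, w y⟫ = ⟪x, y⟫) (α : Vn n) :
    w (coroot α) = coroot (w α) := by
  simp only [coroot, map_smul, hw]

/-- The reflection `s_α` in the hyperplane orthogonal to `α`, as a linear automorphism. It is the
identity for `α = 0`. -/
def rootReflection (α : Vn n) : Vn n ≃ₗ[ℝ] Vn n := (ℝ ∙ α)ᗮ.reflection.toLinearEquiv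

theorem rootReflection_apply (α v : Vn n) : rootReflection α v = v - ⟪v, coroot α⟫ • α := by
  simp only [rootReflection, LinearIsometryEquiv.coe_toLinearEquiv,
    Submodule.reflection_orthogonal_apply, Submodule.reflection_singleton_apply, inner_coroot,
    real_inner_self_eq_norm_sq, real_inner_comm v α, RCLike.ofReal_real_eq_id, id_eq]
  module

theorem rootReflection_eq_reflVec (α v : Vn n) : rootReflection α v = reflVec α v := by
  rw [rootReflection_apply, inner_coroot, reflVec]

theorem inner_rootReflection_rootReflection (α x y : Vn n) :
    ⟪rootReflection α x, rootReflection α y⟫ = ⟪x, y⟫ :=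
  LinearIsometryEquiv.inner_map_map _ x y

theorem rootReflection_rootReflection (α v : Vn n) :
    rootReflection α (rootReflection α v) = v :=
  Submodule.reflection_reflection _ v

theorem rootReflection_mul_self (α : Vn n) : rootReflection α * rootReflection α = 1 :=
  LinearEquiv.ext (rootReflection_rootReflection α)

theorem inv_rootReflection (α : Vn n) : (rootReflection α)⁻¹ = rootReflection α :=
  inv_eq_of_mul_eq_one_right (rootReflection_mul_self α)

theorem inner_rootReflection_left (α x y : Vn n) :
    ⟪rootReflection α x, y⟫ = ⟪x, rootReflection α y⟫ := by
  rw [← inner_rootReflection_rootReflection α, rootReflection_rootReflection]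

theorem rootReflection_self (α : Vn n) : rootReflection α α = -α :=
  Submodule.reflection_orthogonalComplement_singleton_eq_neg α

theorem rootReflection_neg (α : Vn n) : rootReflection (-α) = rootReflection α := by
  ext1 v
  simp only [rootReflection_apply, coroot_neg, inner_neg_right, neg_smul_neg]

theorem mul_rootReflection {w : Vn n ≃ₗ[ℝ] Vn n} (hw : ∀ x y, ⟪w x, w y⟫ = ⟪x, y⟫) (α : Vn n) :
    w * rootReflection α = rootReflection (w α) * w := by
  ext1 v
  simp only [LinearEquiv.mul_apply, rootReflection_apply, map_sub, map_smul, ← map_coroot hw, hw]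

theorem rootReflection_apply_rootReflection (α β : Vn n) :
    rootReflection (rootReflection α β) =
      rootReflection α * rootReflection β * rootReflection α := by
  rw [mul_rootReflection (inner_rootReflection_rootReflection α), mul_assoc,
    rootReflection_mul_self, mul_one]

end Reflection

namespace RootSystemData

variable {n : ℕ} (D : RootSystemData n)

section PositiveRoots

theorem sroot_mem_R (i : Fin n) : D.sroot i ∈ D.R := D.pos_sub (D.sroot_mem i)

theorem inner_sroot_self_pos (i : Fin n) : 0 < ⟪D.sroot i, D.sroot i⟫ :=
  real_inner_self_pos.mpr (D.root_ne_zero _ (D.sroot_mem_R i))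

variable {D}

theorem rootReflection_mem_R {α β : Vn n} (hα : α ∈ D.R) (hβ : β ∈ D.R) :
    rootReflection α β ∈ D.R :=
  rootReflection_eq_reflVec α β ▸ D.reflect_mem α hα β hβ

theorem neg_mem_R {α : Vn n} (hα : α ∈ D.R) : -α ∈ D.R :=
  rootReflection_self α ▸ rootReflection_mem_R hα hα

theorem inner_pos_of_mem_Rplus {v α : Vn n} (hv : ∀ i, 0 < ⟪v, D.sroot i⟫) (hα : α ∈ D.Rplus) :
    0 < ⟪v, α⟫ := by
  obtain ⟨c, rfl⟩ := D.pos_decomp α hα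
  obtain ⟨i, hi⟩ : ∃ i, c i ≠ 0 := by
    by_contra! hc
    exact D.root_ne_zero _ (D.pos_sub hα) (by simp [hc])
  simp only [inner_sum, real_inner_smul_right]
  exact Finset.sum_pos' (fun j _ => mul_nonneg (c j).cast_nonneg (hv j).le)
    ⟨i, Finset.mem_univ i, mul_pos (Nat.cast_pos.mpr (Nat.pos_of_ne_zero hi)) (hv i)⟩

theorem exists_inner_sroot_pos {β : Vn n} (hβ : β ∈ D.Rplus) : ∃ i, 0 < ⟪β, D.sroot i⟫ := by
  by_contra! hle
  obtain ⟨c, hc⟩ := D.pos_decomp β hβ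
  have hself : ⟪β, β⟫ = ∑ i, (c i : ℝ) * ⟪β, D.sroot i⟫ := by
    conv_lhs => rw [hc, inner_sum]
    simp only [real_inner_smul_right, ← hc]
  have hnonpos : ⟪β, β⟫ ≤ 0 := hself ▸ Finset.sum_nonpos fun i _ =>
    mul_nonpos_of_nonneg_of_nonpos (c i).cast_nonneg (hle i)
  exact hnonpos.not_gt (real_inner_self_pos.mpr (D.root_ne_zero β (D.pos_sub hβ)))

theorem inner_fw_sum_smul_sroot (k : Fin n) (c : Fin n → ℝ) :
    ⟪D.fw k, ∑ i, c i • D.sroot i⟫ = c k * (⟪D.sroot k, D.sroot k⟫ / 2) := by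
  have hpair (i : Fin n) :
      ⟪D.fw k, D.sroot i⟫ = if k = i then ⟪D.sroot i, D.sroot i⟫ / 2 else 0 := by
    have hpos := D.inner_sroot_self_pos i
    have h := D.fw_pair k i
    rw [inner_coroot, div_eq_iff hpos.ne'] at h
    split_ifs at h ⊢ <;> linarith
  simp [inner_sum, real_inner_smul_right, hpair]

theorem inner_fw_nonneg (k : Fin n) {α : Vn n} (hα : α ∈ D.Rplus) : 0 ≤ ⟪D.fw k, α⟫ := by
  obtain ⟨c, rfl⟩ := D.pos_decomp α hα
  rw [inner_fw_sum_smul_sroot]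
  exact mul_nonneg (c k).cast_nonneg (half_pos (D.inner_sroot_self_pos k)).le

theorem exists_ne_inner_fw_pos {i : Fin n} {α : Vn n} (hα : α ∈ D.Rplus) (hne : α ≠ D.sroot i) :
    ∃ k ≠ i, 0 < ⟪D.fw k, α⟫ := by
  obtain ⟨c, hc⟩ := D.pos_decomp α hα
  obtain ⟨k, hki, hck⟩ : ∃ k ≠ i, c k ≠ 0 := by
    by_contra! hzero
    have hsmul : α = (c i : ℝ) • D.sroot i := by
      rw [hc, Finset.sum_eq_single i (fun k _ hk => by simp [hzero k hk]) (by simp)]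
    rcases D.reduced _ (D.sroot_mem_R i) (c i) (hsmul ▸ D.pos_sub hα) with h1 | hneg
    · exact hne (by rw [hsmul, h1, one_smul])
    · linarith [(c i).cast_nonneg (α := ℝ)]
  refine ⟨k, hki, ?_⟩
  rw [hc, inner_fw_sum_smul_sroot]
  exact mul_pos (Nat.cast_pos.mpr (Nat.pos_of_ne_zero hck)) (half_pos (D.inner_sroot_self_pos k))

theorem rootReflection_sroot_mem_Rplus {i : Fin n} {α : Vn n} (hα : α ∈ D.Rplus)
    (hne : α ≠ D.sroot i) : rootReflection (D.sroot i) α ∈ D.Rplus := by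
  obtain ⟨k, hki, hpos⟩ := exists_ne_inner_fw_pos hα hne
  have hcoord : ⟪D.fw k, rootReflection (D.sroot i) α⟫ = ⟪D.fw k, α⟫ := by
    rw [← inner_rootReflection_left, rootReflection_apply, D.fw_pair, if_neg hki, zero_smul,
      sub_zero]
  rcases D.pos_or _ (rootReflection_mem_R (D.sroot_mem_R i) (D.pos_sub hα)) with h | hneg
  · exact h
  · have hnonneg := inner_fw_nonneg k hneg
    rw [inner_neg_right, hcoord] at hnonneg
    linarith

end PositiveRoots

section Rho

theorem inner_rho_coroot_sroot (j : Fin n) : ⟪D.rho, coroot (D.sroot j)⟫ = 1 := by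
  simp [rho, sum_inner, D.fw_pair]

theorem inner_rho_sroot_pos (i : Fin n) : 0 < ⟪D.rho, D.sroot i⟫ := by
  have h := D.inner_rho_coroot_sroot i
  have hpos := D.inner_sroot_self_pos i
  rw [inner_coroot, div_eq_iff hpos.ne'] at h
  linarith

variable {D}

theorem inner_rho_coroot_le {α : Vn n} (hα : α ∈ D.R) : ⟪D.rho, coroot α⟫ ≤ D.h - 1 := by
  obtain ⟨c, hc, hsum⟩ := D.theta_highest α hα
  have hpair : ⟪D.rho, coroot D.hst⟫ - ⟪D.rho, coroot α⟫ = ∑ i, c i := by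
    simp only [← inner_sub_right, hsum, inner_sum, real_inner_smul_right, inner_rho_coroot_sroot,
      mul_one]
  have hnonneg : 0 ≤ ∑ i, c i := Finset.sum_nonneg fun i _ => hc i
  rw [RootSystemData.h]
  linarith

theorem abs_inner_rho_coroot_le {α : Vn n} (hα : α ∈ D.R) :
    |⟪D.rho, coroot α⟫| ≤ D.h - 1 := by
  refine abs_le'.mpr ⟨inner_rho_coroot_le hα, ?_⟩
  rw [← inner_neg_right, ← coroot_neg]
  exact inner_rho_coroot_le (neg_mem_R hα)

theorem Rplus_induction {p : Vn n → Prop} (simple : ∀ i, p (D.sroot i))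
    (reflect : ∀ i, ∀ β ∈ D.Rplus, p β → p (rootReflection (D.sroot i) β)) {α : Vn n}
    (hα : α ∈ D.Rplus) : p α := by
  refine (D.Rplus.finite_toSet.wellFoundedOn (r := (⟪D.rho, ·⟫) ⁻¹'o (· < ·))).induction hα
    fun β hβ ih => ?_
  by_cases hsimple : ∃ i, β = D.sroot i
  · obtain ⟨i, rfl⟩ := hsimple
    exact simple i
  push Not at hsimple
  obtain ⟨i, hi⟩ := exists_inner_sroot_pos hβ
  have hlt : ⟪D.rho, rootReflection (D.sroot i) β⟫ < ⟪D.rho, β⟫ := by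
    have hcoroot : 0 < ⟪β, coroot (D.sroot i)⟫ := by
      rw [inner_coroot]
      exact div_pos (mul_pos two_pos hi) (D.inner_sroot_self_pos i)
    rw [rootReflection_apply, inner_sub_right, real_inner_smul_right]
    exact sub_lt_self _ (mul_pos hcoroot (D.inner_rho_sroot_pos i))
  have hmem := rootReflection_sroot_mem_Rplus hβ (hsimple i)
  simpa only [rootReflection_rootReflection] using reflect i _ hmem (ih _ hmem hlt)

end Rho

section WeylGroup

variable {D}

theorem rootReflection_mem_closure_simple {α : Vn n} (hα : α ∈ D.R) :
    rootReflection α ∈ Subgroup.closure (Set.range fun i => rootReflection (D.sroot i)) := by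
  set W₀ := Subgroup.closure (Set.range fun i => rootReflection (D.sroot i))
  have simple_mem (i : Fin n) : rootReflection (D.sroot i) ∈ W₀ := Subgroup.subset_closure ⟨i, rfl⟩
  have pos_mem {β : Vn n} (hβ : β ∈ D.Rplus) : rootReflection β ∈ W₀ := by
    refine Rplus_induction (p := fun β => rootReflection β ∈ W₀) simple_mem (fun i γ _ hγ => ?_) hβ
    rw [rootReflection_apply_rootReflection]
    exact mul_mem (mul_mem (simple_mem i) hγ) (simple_mem i)
  rcases D.pos_or α hα with h | hneg
  · exact pos_mem h
  · exact rootReflection_neg α ▸ pos_mem hneg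

theorem Weyl_le_closure_simple :
    D.Weyl ≤ Subgroup.closure (Set.range fun i => rootReflection (D.sroot i)) := by
  refine (Subgroup.closure_le _).mpr ?_
  rintro w ⟨α, hα, hw⟩
  have hw_eq : w = rootReflection α :=
    LinearEquiv.ext fun v => (hw v).trans (rootReflection_eq_reflVec α v).symm
  exact hw_eq ▸ rootReflection_mem_closure_simple hα

theorem Weyl_induction {p : (Vn n ≃ₗ[ℝ] Vn n) → Prop} (one : p 1)
    (simple_mul : ∀ i w, p w → p (rootReflection (D.sroot i) * w)) {w : Vn n ≃ₗ[ℝ] Vn n}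
    (hw : w ∈ D.Weyl) : p w := by
  replace hw := Weyl_le_closure_simple hw
  induction hw using Subgroup.closure_induction_left with
  | one => exact one
  | mul_left s hs w _ hpw =>
    obtain ⟨i, rfl⟩ := hs
    exact simple_mul i w hpw
  | inv_mul_cancel s hs w _ hpw =>
    obtain ⟨i, rfl⟩ := hs
    exact (inv_rootReflection (D.sroot i)).symm ▸ simple_mul i w hpw

theorem inner_map_map_of_mem_Weyl {w : Vn n ≃ₗ[ℝ] Vn n} (hw : w ∈ D.Weyl) (x y : Vn n) :
    ⟪w x, w y⟫ = ⟪x, y⟫ := by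
  refine Weyl_induction (p := fun w => ⟪w x, w y⟫ = ⟪x, y⟫) rfl (fun i w ih => ?_) hw
  simpa only [LinearEquiv.mul_apply, inner_rootReflection_rootReflection] using ih

theorem map_mem_R {w : Vn n ≃ₗ[ℝ] Vn n} (hw : w ∈ D.Weyl) {α : Vn n} (hα : α ∈ D.R) :
    w α ∈ D.R := by
  refine Weyl_induction (p := fun w => w α ∈ D.R) hα (fun i w ih => ?_) hw
  rw [LinearEquiv.mul_apply]
  exact rootReflection_mem_R (D.sroot_mem_R i) ih

theorem inner_map_coroot {w : Vn n ≃ₗ[ℝ] Vn n} (hw : w ∈ D.Weyl) (x α : Vn n) :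
    ⟪w x, coroot α⟫ = ⟪x, coroot (w⁻¹ α)⟫ := by
  rw [← map_coroot (inner_map_map_of_mem_Weyl (inv_mem hw)),
    ← inner_map_map_of_mem_Weyl hw x, ← LinearEquiv.mul_apply w, mul_inv_cancel,
    LinearEquiv.coe_one, id_eq]

end WeylGroup

section Stabilizer

/-- The product of the simple reflections spelled by a word in their indices. -/
def wordProd (L : List (Fin n)) : Vn n ≃ₗ[ℝ] Vn n :=
  (L.map fun i => rootReflection (D.sroot i)).prod

theorem wordProd_cons (i : Fin n) (L : List (Fin n)) :
    D.wordProd (i :: L) = rootReflection (D.sroot i) * D.wordProd L := by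
  simp only [wordProd, List.map_cons, List.prod_cons]

variable {D}

theorem exists_wordProd_eq {w : Vn n ≃ₗ[ℝ] Vn n} (hw : w ∈ D.Weyl) : ∃ L, D.wordProd L = w := by
  refine Weyl_induction (p := fun w => ∃ L, D.wordProd L = w) ⟨[], rfl⟩ ?_ hw
  rintro i _ ⟨L, rfl⟩
  exact ⟨i :: L, D.wordProd_cons i L⟩

theorem strong_exchange {v : Vn n} (hv : ∀ i, 0 < ⟪v, D.sroot i⟫) (L : List (Fin n)) {β : Vn n}
    (hβ : β ∈ D.Rplus) (hneg : ⟪D.wordProd L v, β⟫ < 0) :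
    ∃ k < L.length, rootReflection β * D.wordProd L = D.wordProd (L.eraseIdx k) := by
  induction L generalizing β with
  | nil => exact absurd (inner_pos_of_mem_Rplus hv hβ) hneg.not_gt
  | cons j L ih =>
    by_cases hβj : β = D.sroot j
    · refine ⟨0, Nat.zero_lt_succ _, ?_⟩
      rw [hβj, wordProd_cons, ← mul_assoc, rootReflection_mul_self, one_mul, List.eraseIdx_zero,
        List.tail_cons]
    · rw [wordProd_cons, LinearEquiv.mul_apply, inner_rootReflection_left] at hneg
      obtain ⟨k, hk, herase⟩ := ih (rootReflection_sroot_mem_Rplus hβ hβj) hneg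
      refine ⟨k + 1, Nat.succ_lt_succ hk, ?_⟩
      rw [List.eraseIdx_cons_succ, wordProd_cons, wordProd_cons, ← herase, ← mul_assoc,
        ← mul_assoc, mul_rootReflection (inner_rootReflection_rootReflection (D.sroot j)),
        rootReflection_rootReflection]

theorem wordProd_eq_one_of_apply_eq_self {v : Vn n} (hv : ∀ i, 0 < ⟪v, D.sroot i⟫)
    (L : List (Fin n)) (hfix : D.wordProd L v = v) : D.wordProd L = 1 := by
  induction hlen : L.length using Nat.strong_induction_on generalizing L with
  | _ m ih =>
    cases L with
    | nil => rfl
    | cons i L =>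
      have htail : D.wordProd L v = rootReflection (D.sroot i) v := by
        rw [wordProd_cons, LinearEquiv.mul_apply] at hfix
        rw [← rootReflection_rootReflection (D.sroot i) (D.wordProd L v), hfix]
      have hneg : ⟪D.wordProd L v, D.sroot i⟫ < 0 := by
        rw [htail, inner_rootReflection_left, rootReflection_self, inner_neg_right]
        exact neg_neg_of_pos (hv i)
      obtain ⟨k, hk, herase⟩ := strong_exchange hv L (D.sroot_mem i) hneg
      rw [wordProd_cons, herase] at hfix ⊢
      refine ih _ ?_ _ hfix rfl
      rw [← hlen, List.length_cons]
      exact Nat.lt_succ_of_le (List.length_eraseIdx_le L k)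

theorem eq_one_of_apply_eq_self {v : Vn n} (hv : ∀ i, 0 < ⟪v, D.sroot i⟫)
    {w : Vn n ≃ₗ[ℝ] Vn n} (hw : w ∈ D.Weyl) (hfix : w v = v) : w = 1 := by
  obtain ⟨L, rfl⟩ := exists_wordProd_eq hw
  exact wordProd_eq_one_of_apply_eq_self hv L hfix

end Stabilizer

section WeightLattice

theorem span_range_sroot : Submodule.span ℝ (Set.range D.sroot) = ⊤ := by
  have pos_mem {α : Vn n} (hα : α ∈ D.Rplus) : α ∈ Submodule.span ℝ (Set.range D.sroot) := by
    obtain ⟨c, rfl⟩ := D.pos_decomp α hα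
    exact sum_mem fun i _ => Submodule.smul_mem _ _ (Submodule.subset_span ⟨i, rfl⟩)
  refine top_le_iff.mp (D.span_top ▸ Submodule.span_le.mpr fun α hα => ?_)
  rcases D.pos_or α hα with h | hneg
  · exact pos_mem h
  · exact (Submodule.neg_mem_iff _).mp (pos_mem hneg)

variable {D}

theorem ext_inner_coroot_sroot {x y : Vn n}
    (hxy : ∀ j, ⟪x, coroot (D.sroot j)⟫ = ⟪y, coroot (D.sroot j)⟫) : x = y := by
  have hsroot (j : Fin n) : ⟪x, D.sroot j⟫ = ⟪y, D.sroot j⟫ := by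
    have h := hxy j
    rw [inner_coroot, inner_coroot, div_left_inj' (D.inner_sroot_self_pos j).ne'] at h
    linarith
  have hdual : innerₛₗ ℝ x = innerₛₗ ℝ y :=
    LinearMap.ext_on_range D.span_range_sroot hsroot
  exact ext_inner_right ℝ (LinearMap.congr_fun hdual)

theorem mem_P_iff {v : Vn n} : v ∈ D.P ↔ ∀ j, ∃ z : ℤ, ⟪v, coroot (D.sroot j)⟫ = z := by
  have hpair (z : Fin n → ℤ) (j : Fin n) :
      ⟪∑ i, z i • D.fw i, coroot (D.sroot j)⟫ = z j := by
    simp [sum_inner, ← Int.cast_smul_eq_zsmul ℝ, real_inner_smul_left, D.fw_pair]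
  rw [P, Submodule.mem_span_range_iff_exists_fun]
  constructor
  · rintro ⟨z, rfl⟩ j
    exact ⟨z j, hpair z j⟩
  · intro hv
    choose z hz using hv
    exact ⟨z, ext_inner_coroot_sroot fun j => (hpair z j).trans (hz j).symm⟩

theorem mem_P_of_mem_R {α : Vn n} (hα : α ∈ D.R) : α ∈ D.P :=
  mem_P_iff.mpr fun j => inner_coroot α (D.sroot j) ▸
    D.crystallographic _ (D.sroot_mem_R j) α hα

theorem map_mem_P {w : Vn n ≃ₗ[ℝ] Vn n} (hw : w ∈ D.Weyl) {p : Vn n} (hp : p ∈ D.P) :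
    w p ∈ D.P := by
  refine Weyl_induction (p := fun w => w p ∈ D.P) hp (fun i w ih => ?_) hw
  obtain ⟨z, hz⟩ := mem_P_iff.mp ih i
  rw [LinearEquiv.mul_apply, rootReflection_apply, hz, Int.cast_smul_eq_zsmul]
  exact sub_mem ih (zsmul_mem (mem_P_of_mem_R (D.sroot_mem_R i)) z)

end WeightLattice

section Congruence

variable {D}

theorem abs_inner_map_rho_sub_rho_le {w : Vn n ≃ₗ[ℝ] Vn n} (hw : w ∈ D.Weyl) (j : Fin n) :
    |⟪w D.rho - D.rho, coroot (D.sroot j)⟫| ≤ D.h := by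
  have hpair : ⟪w D.rho - D.rho, coroot (D.sroot j)⟫ =
      ⟪D.rho, coroot (w⁻¹ (D.sroot j))⟫ - 1 := by
    rw [inner_sub_left, inner_map_coroot hw, inner_rho_coroot_sroot]
  calc |⟪w D.rho - D.rho, coroot (D.sroot j)⟫|
      ≤ |⟪D.rho, coroot (w⁻¹ (D.sroot j))⟫| + |1| := hpair ▸ abs_sub _ _
    _ ≤ D.h - 1 + 1 := by
      rw [abs_one]
      gcongr
      exact abs_inner_rho_coroot_le (map_mem_R (inv_mem hw) (D.sroot_mem_R j))
    _ = D.h := sub_add_cancel _ _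

theorem map_rho_eq_rho_of_sub_eq_smul {m : ℝ} (hm : D.h < m) {w : Vn n ≃ₗ[ℝ] Vn n}
    (hw : w ∈ D.Weyl) {p : Vn n} (hp : p ∈ D.P) (hwp : w D.rho - D.rho = m • p) :
    w D.rho = D.rho := by
  refine sub_eq_zero.mp (ext_inner_coroot_sroot (D := D) fun j => ?_)
  obtain ⟨z, hz⟩ := mem_P_iff.mp hp j
  have hmul : ⟪w D.rho - D.rho, coroot (D.sroot j)⟫ = m * z := by
    rw [hwp, real_inner_smul_left, hz]
  have hbound : |m * z| < m := (hmul ▸ abs_inner_map_rho_sub_rho_le hw j).trans_lt hm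
  have hm_pos : 0 < m := (abs_nonneg _).trans_lt hbound
  have hz_zero : z = 0 := by
    rw [abs_mul, abs_of_pos hm_pos, mul_lt_iff_lt_one_right hm_pos] at hbound
    exact Int.abs_lt_one_iff.mp (by exact_mod_cast hbound)
  rw [hmul, hz_zero, Int.cast_zero, mul_zero, inner_zero_left]

end Congruence

end RootSystemData

theorem stmt_8_general {n : ℕ} (D : RootSystemData n) {m : ℝ} (hm : D.h < m)
    {w w' : Vn n ≃ₗ[ℝ] Vn n} (hw : w ∈ D.Weyl) (hw' : w' ∈ D.Weyl)
    (hp : ∃ p ∈ D.P, w D.rho - w' D.rho = m • p) : w = w' := by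
  obtain ⟨p, hp, hsub⟩ := hp
  have hquot : w'⁻¹ * w ∈ D.Weyl := mul_mem (inv_mem hw') hw
  have hquot_sub : (w'⁻¹ * w) D.rho - D.rho = m • w'⁻¹ p := by
    rw [← map_smul, ← hsub, map_sub, ← LinearEquiv.mul_apply, ← LinearEquiv.mul_apply,
      inv_mul_cancel, LinearEquiv.coe_one, id_eq]
  have hfix : (w'⁻¹ * w) D.rho = D.rho :=
    RootSystemData.map_rho_eq_rho_of_sub_eq_smul hm hquot
      (RootSystemData.map_mem_P (inv_mem hw') hp) hquot_sub
  have hone : w'⁻¹ * w = 1 :=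
    RootSystemData.eq_one_of_apply_eq_self D.inner_rho_sroot_pos hquot hfix
  exact (inv_mul_eq_one.mp hone).symm

/-- if `w ∈ W` satisfies `w(ρ) − ρ ∈ (1+h)P`, then `w = 1`.  Consequently
the `W`-orbit of the image of `ρ` in `P/(1+h)P` is free (distinct elements of `W` move
`ρ` to distinct classes), i.e. it has exactly `|W|` elements. -/
theorem stmt_8 {n : ℕ} (D : RootSystemData n) :
    (∀ w ∈ D.Weyl, (∃ p ∈ D.P, w D.rho - D.rho = (1 + D.h) • p) → w = 1) ∧
      ∀ w ∈ D.Weyl, ∀ w' ∈ D.Weyl,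
        (∃ p ∈ D.P, w D.rho - w' D.rho = (1 + D.h) • p) → w = w' := by
  have hm : D.h < 1 + D.h := lt_one_add D.h
  exact ⟨fun w hw => stmt_8_general D hm hw (one_mem D.Weyl),
    fun w hw w' hw' => stmt_8_general D hm hw hw'⟩
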